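/- Let (X, d) be a metric space equipped with its Borel σ-algebra, let μ_b (the generalized source / barycenter distribution) and μ_t (the target distribution) be Borel probability measures on X, and let f : X → {0, 1} be a measurable labeling function. For a measurable ψ : X → [0, 1] define the expected risk ε_μ(ψ) = ∫ |f(x) − ψ(x)| dμ(x). Let φ^S : X → [0, 1] be M-Lipschitz (M ≥ 0). Then for every M-Lipschitz function φ : X → [0, 1] and every coupling π of μ_b and μ_t with (a,b) ↦ d(a,b) integrable with respect to π, ε_{μ_t}(φ^S) ≤ ε_{μ_b}(φ^S) + 2M ∫ d(a, b) dπ(a, b) + ε_{μ_t}(φ) + ε_{μ_b}(φ). In particular, taking the infimum over couplings π and over M-Lipschitz φ yields ε_{μ_t}(φ^S) ≤ ε_{μ_b}(φ^S) + 2M · W₁(μ_b, μ_t) + λ with λ = min_{φ M-Lipschitz, φ : X → [0,1]} ( ε_{μ_t}(φ) + ε_{μ_b}(φ) ). -/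

import Mathlib

open MeasureTheory

/-- Generalization bound (Theorem 2). With binary labeling function `f`,
risk `ε_μ(ψ) = ∫ |f - ψ| dμ`, and `M`-Lipschitz `φ^S : X → [0,1]`: for every
`M`-Lipschitz `φ : X → [0,1]` and every coupling `π` of `μ_b, μ_t` with integrable
distance, `ε_{μ_t}(φ^S) ≤ ε_{μ_b}(φ^S) + 2M ∫ d dπ + ε_{μ_t}(φ) + ε_{μ_b}(φ)`;
in particular, taking infima over couplings and over `φ` gives
`ε_{μ_t}(φ^S) ≤ ε_{μ_b}(φ^S) + 2M · W₁(μ_b, μ_t) + λ`. -/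
theorem stmt11 {X : Type*} [MetricSpace X] [MeasurableSpace X] [BorelSpace X]
    (μb μt : Measure X) [IsProbabilityMeasure μb] [IsProbabilityMeasure μt]
    (f : X → ℝ) (hf : Measurable f) (hf01 : ∀ x, f x = 0 ∨ f x = 1)
    (M : ℝ) (hM : 0 ≤ M) (φS : X → ℝ)
    (hφSLip : ∀ a b, |φS a - φS b| ≤ M * dist a b)
    (hφS01 : ∀ x, φS x ∈ Set.Icc (0 : ℝ) 1) :
    (∀ φ : X → ℝ, (∀ a b, |φ a - φ b| ≤ M * dist a b) →
      (∀ x, φ x ∈ Set.Icc (0 : ℝ) 1) →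
      ∀ π : Measure (X × X), IsProbabilityMeasure π →
        π.map Prod.fst = μb → π.map Prod.snd = μt →
        Integrable (fun z : X × X => dist z.1 z.2) π →
        ∫ x, |f x - φS x| ∂μt ≤
          (∫ x, |f x - φS x| ∂μb) + 2 * M * (∫ z : X × X, dist z.1 z.2 ∂π)
            + ((∫ x, |f x - φ x| ∂μt) + ∫ x, |f x - φ x| ∂μb)) ∧
    (({c : ℝ | ∃ π : Measure (X × X), IsProbabilityMeasure π ∧
        π.map Prod.fst = μb ∧ π.map Prod.snd = μt ∧
        Integrable (fun z : X × X => dist z.1 z.2) π ∧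
        c = ∫ z : X × X, dist z.1 z.2 ∂π}).Nonempty →
      ∫ x, |f x - φS x| ∂μt ≤
        (∫ x, |f x - φS x| ∂μb)
          + 2 * M * sInf {c : ℝ | ∃ π : Measure (X × X), IsProbabilityMeasure π ∧
              π.map Prod.fst = μb ∧ π.map Prod.snd = μt ∧
              Integrable (fun z : X × X => dist z.1 z.2) π ∧
              c = ∫ z : X × X, dist z.1 z.2 ∂π}
          + sInf {r : ℝ | ∃ φ : X → ℝ, (∀ a b, |φ a - φ b| ≤ M * dist a b) ∧
              (∀ x, φ x ∈ Set.Icc (0 : ℝ) 1) ∧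
              r = (∫ x, |f x - φ x| ∂μt) + ∫ x, |f x - φ x| ∂μb}) := by
  have meas : ∀ φ : X → ℝ, (∀ a b, |φ a - φ b| ≤ M * dist a b) → Measurable φ := by
    intro φ h
    have : LipschitzWith ⟨M, hM⟩ φ := LipschitzWith.of_dist_le_mul (fun a b => by
      rw [Real.dist_eq]; exact h a b)
    exact this.continuous.measurable
  have measd : ∀ φ : X → ℝ, (∀ a b, |φ a - φ b| ≤ M * dist a b) →
      Measurable (fun x => |f x - φ x|) := by
    intro φ h
    have h1 := (hf.sub (meas φ h)).norm
    exact h1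
  have key : (∀ φ : X → ℝ, (∀ a b, |φ a - φ b| ≤ M * dist a b) →
      (∀ x, φ x ∈ Set.Icc (0 : ℝ) 1) →
      ∀ π : Measure (X × X), IsProbabilityMeasure π →
        π.map Prod.fst = μb → π.map Prod.snd = μt →
        Integrable (fun z : X × X => dist z.1 z.2) π →
        ∫ x, |f x - φS x| ∂μt ≤
          (∫ x, |f x - φS x| ∂μb) + 2 * M * (∫ z : X × X, dist z.1 z.2 ∂π)
            + ((∫ x, |f x - φ x| ∂μt) + ∫ x, |f x - φ x| ∂μb)) := by
    intro φ hL h01 π hπ hb ht hd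
    have bd : ∀ ψ : X → ℝ, (∀ x, ψ x ∈ Set.Icc (0 : ℝ) 1) → ∀ x, ‖|f x - ψ x|‖ ≤ 1 := by
      intro ψ hψ x
      rw [Real.norm_eq_abs, abs_abs, abs_le]
      obtain ⟨h0, h1⟩ := hψ x
      rcases hf01 x with h | h <;> rw [h] <;> constructor <;> linarith
    have m1 := measd φS hφSLip
    have m2 := measd φ hL
    have eqb : ∀ g : X → ℝ, Measurable g → ∫ x, g x ∂μb = ∫ z, g z.1 ∂π := by
      intro g hg
      rw [← hb, integral_map measurable_fst.aemeasurable hg.aestronglyMeasurable]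
    have eqt : ∀ g : X → ℝ, Measurable g → ∫ x, g x ∂μt = ∫ z, g z.2 ∂π := by
      intro g hg
      rw [← ht, integral_map measurable_snd.aemeasurable hg.aestronglyMeasurable]
    have i1 : Integrable (fun z : X × X => |f z.1 - φS z.1|) π :=
      Integrable.of_bound (m1.comp measurable_fst).aestronglyMeasurable 1
        (Filter.Eventually.of_forall fun z => bd φS hφS01 z.1)
    have i2 : Integrable (fun z : X × X => |f z.2 - φS z.2|) π :=
      Integrable.of_bound (m1.comp measurable_snd).aestronglyMeasurable 1
        (Filter.Eventually.of_forall fun z => bd φS hφS01 z.2)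
    have i3 : Integrable (fun z : X × X => |f z.1 - φ z.1|) π :=
      Integrable.of_bound (m2.comp measurable_fst).aestronglyMeasurable 1
        (Filter.Eventually.of_forall fun z => bd φ h01 z.1)
    have i4 : Integrable (fun z : X × X => |f z.2 - φ z.2|) π :=
      Integrable.of_bound (m2.comp measurable_snd).aestronglyMeasurable 1
        (Filter.Eventually.of_forall fun z => bd φ h01 z.2)
    have i5 := hd.const_mul (2 * M)
    rw [eqt _ m1, eqb _ m1, eqt _ m2, eqb _ m2, ← integral_const_mul,
      ← integral_add i1 i5, ← integral_add i4 i3]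
    have e := integral_add (i1.add i5) (i4.add i3)
    refine le_trans ?_ (le_of_eq e)
    refine integral_mono i2 ((i1.add i5).add (i4.add i3)) ?_
    rintro ⟨a, b⟩
    have h1 := hL a b
    have h2 := hφSLip a b
    show |f b - φS b| ≤ |f a - φS a| + 2 * M * dist a b + (|f b - φ b| + |f a - φ a|)
    rw [abs_le] at h1 h2
    have h3 := abs_le.1 (le_refl |f a - φS a|)
    have h4 := abs_le.1 (le_refl |f b - φ b|)
    have h5 := abs_le.1 (le_refl |f a - φ a|)
    rw [abs_le]
    constructor <;> linarith [h1.1, h1.2, h2.1, h2.2, h3.1, h3.2, h4.1, h4.2, h5.1, h5.2]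
  refine ⟨key, fun hne => ?_⟩
  have step : ∀ c ∈ {c : ℝ | ∃ π : Measure (X × X), IsProbabilityMeasure π ∧
        π.map Prod.fst = μb ∧ π.map Prod.snd = μt ∧
        Integrable (fun z : X × X => dist z.1 z.2) π ∧
        c = ∫ z : X × X, dist z.1 z.2 ∂π}, 
        (∫ x, |f x - φS x| ∂μt) - (∫ x, |f x - φS x| ∂μb) - 2 * M * c ≤ 
          sInf {r : ℝ | ∃ φ : X → ℝ, (∀ a b, |φ a - φ b| ≤ M * dist a b) ∧
              (∀ x, φ x ∈ Set.Icc (0 : ℝ) 1) ∧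
              r = (∫ x, |f x - φ x| ∂μt) + ∫ x, |f x - φ x| ∂μb} := by
    rintro c ⟨π, hπ, hb, ht, hd, rfl⟩
    refine le_csInf ⟨_, φS, hφSLip, hφS01, rfl⟩ ?_
    rintro r ⟨φ, hL, h01, rfl⟩
    linarith [key φ hL h01 π hπ hb ht hd]
  generalize sInf {r : ℝ | ∃ φ : X → ℝ, (∀ a b, |φ a - φ b| ≤ M * dist a b) ∧
              (∀ x, φ x ∈ Set.Icc (0 : ℝ) 1) ∧
              r = (∫ x, |f x - φ x| ∂μt) + ∫ x, |f x - φ x| ∂μb} = L at step ⊢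
  rcases hM.eq_or_lt with h0 | hpos
  · obtain ⟨c, hc⟩ := hne
    have := step c hc
    rw [← h0] at this ⊢
    linarith
  · have := le_csInf (a := ((∫ x, |f x - φS x| ∂μt) - (∫ x, |f x - φS x| ∂μb) - L) / (2 * M)) hne
      (fun c hc => by
        rw [div_le_iff₀ (by positivity)]
        linarith [step c hc])
    rw [div_le_iff₀ (by positivity)] at this
    linarith
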